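/- arXiv:1709.09117 — 5 statements merged into one kernel-verified Lean document; each statement's English description precedes it below -/
import Mathlib

section
/- (Williams–Daly–Zachary.) The surplus function W is differentiable at every v ∈ ℝ^N, and for each i its partial derivative equals the choice probability: ∂W(v)/∂v_i = q_i(v) = P(v_i + ε_i ≥ v_j + ε_j for all j); in particular ∇W(v) ∈ Δ. -/
/-!
For each shock `x`, the maximum `⨆ i, (v i + x i)` is 1-Lipschitz in `v`, and it is differentiable
at `v` with gradient the `i`-th basis vector whenever `i` is the only maximizer. Ties lie in finitely
many affine hyperplanes (`tie_null`), which an absolutely continuous law does not charge, so the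
maximizer is almost surely unique (`ae_exists_unique_best`). Dominated differentiation under the
integral then gives the gradient of the surplus as the vector of choice probabilities
(`hasFDerivAt_surplus`); almost sure uniqueness also makes these sum to one (`sum_choiceProb`).
-/

open MeasureTheory Real

/-- The surplus function `W(v) = E[max_i (v_i + ε_i)]` of an additive random utility model,
where `μ` is the distribution of the random utility shocks `ε`. -/
noncomputable def surplus (N : ℕ) (μ : Measure (Fin N → ℝ)) (v : Fin N → ℝ) : ℝ :=
  ∫ x, (⨆ i : Fin N, (v i + x i)) ∂μ

/-- The choice probability `q_i(v) = P(v_i + ε_i ≥ v_j + ε_j for all j)`. -/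
noncomputable def choiceProb (N : ℕ) (μ : Measure (Fin N → ℝ)) (v : Fin N → ℝ) (i : Fin N) : ℝ :=
  (μ {x | ∀ j, v j + x j ≤ v i + x i}).toReal

/-- `H(y) = ∇(e^W)(log y)`, i.e. `H_i(e^v) = ∂(e^{W(v)})/∂v_i`. -/
noncomputable def genH (N : ℕ) (μ : Measure (Fin N → ℝ)) (y : Fin N → ℝ) (i : Fin N) : ℝ :=
  fderiv ℝ (fun v => Real.exp (surplus N μ v)) (fun j => Real.log (y j)) (Pi.single i 1)

/-- The unit simplex `Δ` in `ℝ^N`. -/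
def unitSimplex (N : ℕ) : Set (Fin N → ℝ) := {q | (∀ i, 0 ≤ q i) ∧ ∑ i, q i = 1}

/-- The relative interior of the unit simplex `Δ` in `ℝ^N`. -/
def unitSimplexRI (N : ℕ) : Set (Fin N → ℝ) := {q | (∀ i, 0 < q i) ∧ ∑ i, q i = 1}

/-- Ties between two distinct alternatives form an affine hyperplane, hence are null. -/
lemma tie_null {N : ℕ} (v : Fin N → ℝ) {i j : Fin N} (hij : i ≠ j) :
    volume {x : Fin N → ℝ | v i + x i = v j + x j} = 0 := by
  let L : (Fin N → ℝ) →ₗ[ℝ] ℝ :=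
    LinearMap.proj (R := ℝ) (φ := fun _ : Fin N => ℝ) i - LinearMap.proj j
  have h0 : volume (LinearMap.ker L : Set (Fin N → ℝ)) = 0 := by
    refine Measure.addHaar_submodule _ _ fun htop => ?_
    have h1 : Pi.single i (1 : ℝ) ∈ LinearMap.ker L := htop ▸ Submodule.mem_top
    simp [L, hij.symm] at h1
  have h2 : {x : Fin N → ℝ | v i + x i = v j + x j} =
      (fun x => v + x) ⁻¹' (LinearMap.ker L : Set (Fin N → ℝ)) := by
    ext x
    simp [L, sub_eq_zero]
  rw [h2, measure_preimage_add, h0]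

/-- The event that alternative `i` is optimal at `v`; its probability is `choiceProb`. -/
def choiceSet {N : ℕ} (v : Fin N → ℝ) (i : Fin N) : Set (Fin N → ℝ) :=
  {x | ∀ j, v j + x j ≤ v i + x i}

lemma measurableSet_choiceSet {N : ℕ} (v : Fin N → ℝ) (i : Fin N) :
    MeasurableSet (choiceSet v i) := by
  have : choiceSet v i = ⋂ j, {x | v j + x j ≤ v i + x i} := by
    ext x
    simp [choiceSet]
  rw [this]
  exact MeasurableSet.iInter fun j => measurableSet_le (by fun_prop) (by fun_prop)

/-- Under an absolutely continuous law, the optimal alternative is almost surely unique. -/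
lemma ae_exists_unique_best {N : ℕ} [NeZero N] {μ : Measure (Fin N → ℝ)} (hac : μ ≪ volume)
    (v : Fin N → ℝ) : ∀ᵐ x ∂μ, ∃ i, ∀ j, j ≠ i → v j + x j < v i + x i := by
  have h : ∀ᵐ x ∂μ, ∀ i j : Fin N, i ≠ j → v i + x i ≠ v j + x j := by
    refine ae_all_iff.2 fun i => ae_all_iff.2 fun j => ?_
    by_cases hij : i = j
    · simp [hij]
    · have := hac (tie_null v hij)
      filter_upwards [measure_eq_zero_iff_ae_notMem.1 this] with x hx _ using hx
  filter_upwards [h] with x hx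
  obtain ⟨i, hi⟩ := Finite.exists_max fun i => v i + x i
  exact ⟨i, fun j hj => lt_of_le_of_ne (hi j) (hx j i hj)⟩

lemma sum_indicator_choiceSet {N : ℕ} {E : Type*} [AddCommMonoid E] {v x : Fin N → ℝ} {i : Fin N}
    (hi : ∀ j, j ≠ i → v j + x j < v i + x i) (c : Fin N → E) :
    ∑ k, (choiceSet v k).indicator (fun _ => c k) x = c i := by
  rw [Finset.sum_eq_single i]
  · refine Set.indicator_of_mem (fun j => ?_) _
    rcases eq_or_ne j i with rfl | hj
    · exact le_rfl
    · exact (hi j hj).le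
  · intro k _ hk
    exact Set.indicator_of_notMem (s := choiceSet v k)
      (fun hmem => absurd (hmem i) (not_le.2 (hi k hk))) _
  · simp

lemma integrable_sum_indicator {N : ℕ} {E : Type*} [NormedAddCommGroup E]
    {μ : Measure (Fin N → ℝ)} [IsProbabilityMeasure μ] (v : Fin N → ℝ) (c : Fin N → E) :
    Integrable (fun x => ∑ i, (choiceSet v i).indicator (fun _ => c i) x) μ :=
  integrable_finsetSum _ fun i _ =>
    (integrable_const (c i)).indicator (measurableSet_choiceSet v i)

lemma integral_sum_indicator {N : ℕ} {E : Type*} [NormedAddCommGroup E] [NormedSpace ℝ E]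
    [CompleteSpace E] {μ : Measure (Fin N → ℝ)} [IsProbabilityMeasure μ] (v : Fin N → ℝ)
    (c : Fin N → E) :
    ∫ x, ∑ i, (choiceSet v i).indicator (fun _ => c i) x ∂μ = ∑ i, choiceProb N μ v i • c i := by
  rw [integral_finsetSum _ fun i _ =>
    (integrable_const (c i)).indicator (measurableSet_choiceSet v i)]
  simp only [integral_indicator_const _ (measurableSet_choiceSet v _)]
  rfl

lemma lipschitz_iSup_add {N : ℕ} [NeZero N] (x v w : Fin N → ℝ) :
    ‖(⨆ i, (w i + x i)) - ⨆ i, (v i + x i)‖ ≤ ‖w - v‖ := by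
  have key : ∀ a b : Fin N → ℝ, (⨆ i, (a i + x i)) ≤ (⨆ i, (b i + x i)) + ‖a - b‖ := by
    intro a b
    refine ciSup_le fun i => ?_
    have h1 := le_ciSup (Set.finite_range fun i => b i + x i).bddAbove i
    have h2 := (le_abs_self _).trans (norm_le_pi_norm (a - b) i)
    simp only [Pi.sub_apply] at h1 h2
    linarith
  have h1 := key w v
  have h2 := key v w
  rw [norm_sub_rev] at h2
  rw [Real.norm_eq_abs, abs_le]
  constructor <;> linarith

/-- When `i` is the strict maximizer at `v`, it remains so near `v`, where the maximum is
therefore the affine function `w ↦ w i + x i`. -/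
lemma hasFDerivAt_iSup_add {N : ℕ} [NeZero N] {v x : Fin N → ℝ} {i : Fin N}
    (hi : ∀ j, j ≠ i → v j + x j < v i + x i) :
    HasFDerivAt (fun w : Fin N → ℝ => ⨆ j, (w j + x j))
      (ContinuousLinearMap.proj (R := ℝ) (φ := fun _ : Fin N => ℝ) i) v := by
  have hev : ∀ᶠ w in nhds v, ∀ j, j ≠ i → w j + x j < w i + x i := by
    refine Filter.eventually_all.2 fun j => ?_
    by_cases hj : j = i
    · simp [hj]
    · have : ∀ᶠ w : Fin N → ℝ in nhds v, w j + x j < w i + x i :=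
        ContinuousAt.eventually_lt
          ((continuous_apply j).add continuous_const).continuousAt
          ((continuous_apply i).add continuous_const).continuousAt (hi j hj)
      exact this.mono fun w hw _ => hw
  have hd : HasFDerivAt (fun w : Fin N → ℝ => w i + x i)
      (ContinuousLinearMap.proj (R := ℝ) (φ := fun _ : Fin N => ℝ) i) v :=
    (ContinuousLinearMap.proj (R := ℝ) (φ := fun _ : Fin N => ℝ) i).hasFDerivAt.add_const _
  refine hd.congr_of_eventuallyEq (hev.mono fun w hw => le_antisymm (ciSup_le fun j => ?_)
    (le_ciSup (Set.finite_range fun j => w j + x j).bddAbove i))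
  rcases eq_or_ne j i with rfl | hj
  · exact le_rfl
  · exact (hw j hj).le

lemma measurable_iSup_add {N : ℕ} (w : Fin N → ℝ) :
    Measurable fun x : Fin N → ℝ => ⨆ i, (w i + x i) :=
  Measurable.iSup fun i => by fun_prop

lemma integrable_iSup_add {N : ℕ} [NeZero N] {μ : Measure (Fin N → ℝ)} [IsProbabilityMeasure μ]
    (hint : ∀ i, Integrable (fun x => x i) μ) (v : Fin N → ℝ) :
    Integrable (fun x => ⨆ i, (v i + x i)) μ := by
  have hg : Integrable (fun x : Fin N → ℝ => ∑ i, |v i + x i|) μ :=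
    integrable_finsetSum _ fun i _ => ((integrable_const _).add (hint i)).abs
  refine hg.mono' (measurable_iSup_add v).aestronglyMeasurable (.of_forall fun x => ?_)
  obtain ⟨i, hi⟩ := exists_eq_ciSup_of_finite (f := fun i => v i + x i)
  rw [← hi, Real.norm_eq_abs]
  exact Finset.single_le_sum (f := fun i => |v i + x i|) (fun _ _ => abs_nonneg _)
    (Finset.mem_univ i)

/-- The pointwise gradient of the maximum, integrated against `μ`, is the derivative of the
surplus: the maximum is 1-Lipschitz in `v`, so differentiation under the integral applies. -/
lemma hasFDerivAt_surplus {N : ℕ} [NeZero N] {μ : Measure (Fin N → ℝ)} [IsProbabilityMeasure μ]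
    (hac : μ ≪ volume) (hint : ∀ i, Integrable (fun x => x i) μ) (v : Fin N → ℝ) :
    HasFDerivAt (surplus N μ)
      (∑ i, choiceProb N μ v i • ContinuousLinearMap.proj (R := ℝ) (φ := fun _ : Fin N => ℝ) i)
      v := by
  have h := hasFDerivAt_integral_of_dominated_loc_of_lip' (μ := μ) (𝕜 := ℝ)
    (F := fun (w x : Fin N → ℝ) => ⨆ i, (w i + x i)) (x₀ := v) (bound := fun _ => 1)
    (F' := fun x => ∑ i, (choiceSet v i).indicator (fun _ =>
      ContinuousLinearMap.proj (R := ℝ) (φ := fun _ : Fin N => ℝ) i) x) (s := Set.univ)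
    Filter.univ_mem
    (fun w _ => (measurable_iSup_add w).aestronglyMeasurable)
    (integrable_iSup_add hint v) (integrable_sum_indicator v _).aestronglyMeasurable
    (.of_forall fun x w _ => by simpa using lipschitz_iSup_add x v w)
    (integrable_const _)
    (by
      filter_upwards [ae_exists_unique_best hac v] with x ⟨i, hi⟩
      rw [sum_indicator_choiceSet hi]
      exact hasFDerivAt_iSup_add hi)
  rw [integral_sum_indicator] at h
  exact h.2

lemma sum_choiceProb {N : ℕ} [NeZero N] {μ : Measure (Fin N → ℝ)} [IsProbabilityMeasure μ]
    (hac : μ ≪ volume) (v : Fin N → ℝ) : ∑ i, choiceProb N μ v i = 1 := by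
  have h1 : ∫ x, ∑ i, (choiceSet v i).indicator (fun _ => (1 : ℝ)) x ∂μ = ∫ _, (1 : ℝ) ∂μ := by
    refine integral_congr_ae ?_
    filter_upwards [ae_exists_unique_best hac v] with x ⟨i, hi⟩
    exact sum_indicator_choiceSet hi _
  rw [integral_sum_indicator] at h1
  simpa using h1

/-- Williams–Daly–Zachary: the surplus function `W` is differentiable at every
`v ∈ ℝ^N`, its partial derivatives are the choice probabilities
`∂W(v)/∂v_i = q_i(v) = P(v_i + ε_i ≥ v_j + ε_j ∀ j)`, and `∇W(v) ∈ Δ`. -/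
theorem williams_daly_zachary (N : ℕ) (hN : 2 ≤ N) (μ : Measure (Fin N → ℝ))
    (hprob : IsProbabilityMeasure μ) (hac : μ ≪ volume)
    (hsupp : ∀ U : Set (Fin N → ℝ), IsOpen U → U.Nonempty → 0 < μ U)
    (hint : ∀ i, Integrable (fun x => x i) μ) (v : Fin N → ℝ) :
    DifferentiableAt ℝ (surplus N μ) v ∧
    (∀ i, fderiv ℝ (surplus N μ) v (Pi.single i 1) = choiceProb N μ v i) ∧
    (fun i => fderiv ℝ (surplus N μ) v (Pi.single i 1)) ∈ unitSimplex N := by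
  have : NeZero N := ⟨by omega⟩
  have h := hasFDerivAt_surplus hac hint v
  have hpart : ∀ i, fderiv ℝ (surplus N μ) v (Pi.single i 1) = choiceProb N μ v i := by
    intro i
    simp [h.fderiv, Pi.single_apply]
  refine ⟨h.differentiableAt, hpart, ?_, ?_⟩
  · intro i
    simp only [hpart]
    exact ENNReal.toReal_nonneg
  · simp only [hpart]
    exact sum_choiceProb hac v
end

section
/- (Lemma A.1, injectivity part.) The map v ↦ ∇(e^{W})(v) from ℝ^N to ℝ^N is injective; equivalently, H restricted to the positive orthant (0,∞)^N is injective. -/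
/-!
Write `G u = max_i u_i` on `ℝ^N`, so that `W v = E[G (v + ε)]`, and `f = e^W`.

`f` is differentiable: `G` is Lipschitz, hence differentiable Lebesgue-almost everywhere by
Rademacher's theorem; as the law of `ε` is absolutely continuous, `G` is almost surely
differentiable at `v + ε`, and one may differentiate under the expectation
(`differentiable_surplus`).

`f` is convex, because `G` and `exp` are, and it is strictly midpoint convex
(`exp_surplus_midpoint_lt`). If `W v ≠ W w` this is strict convexity of `exp`. If `W v = W w` and
`v ≠ w`, then `w - v` is not a multiple of the all-ones vector, since `W (v + c) = W v + c`. In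
that case the midpoint inequality of `G` is strict at `ε = -(v + w)/2`, hence on a neighbourhood of
this point, which has positive probability by full support, so the midpoint inequality of `W` is
strict (`surplus_midpoint_lt`).

If `f` had the same gradient at two points `v ≠ w`, adding the tangent inequalities at `v` and `w`,
both evaluated at the midpoint, would give `f v + f w ≤ 2 f ((v + w)/2)`, a contradiction.
-/

open MeasureTheory Real

/-- The coordinatewise maximum `G u = max_i u_i` on `ℝ^N`. -/
noncomputable def coordMax (N : ℕ) (u : Fin N → ℝ) : ℝ := ⨆ i : Fin N, u i

lemma surplus_eq (N : ℕ) (μ : Measure (Fin N → ℝ)) (v : Fin N → ℝ) :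
    surplus N μ v = ∫ x, coordMax N (v + x) ∂μ := rfl

lemma le_coordMax {N : ℕ} (u : Fin N → ℝ) (i : Fin N) : u i ≤ coordMax N u :=
  le_ciSup (f := u) (Set.finite_range u).bddAbove i

lemma coordMax_le {N : ℕ} [Nonempty (Fin N)] {u : Fin N → ℝ} {c : ℝ} (h : ∀ i, u i ≤ c) :
    coordMax N u ≤ c := ciSup_le h

lemma lipschitz_coordMax (N : ℕ) [Nonempty (Fin N)] : LipschitzWith 1 (coordMax N) := by
  refine LipschitzWith.of_le_add fun u w => coordMax_le fun i => ?_
  have h1 := le_coordMax w i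
  have h2 : u i - w i ≤ dist u w :=
    (le_abs_self _).trans (by simpa [Real.dist_eq] using dist_le_pi_dist u w i)
  linarith

lemma convex_coordMax (N : ℕ) [Nonempty (Fin N)] : ConvexOn ℝ Set.univ (coordMax N) := by
  refine ⟨convex_univ, fun u _ w _ a b ha hb _ => coordMax_le fun i => ?_⟩
  simp only [Pi.add_apply, Pi.smul_apply, smul_eq_mul]
  exact add_le_add (mul_le_mul_of_nonneg_left (le_coordMax u i) ha)
    (mul_le_mul_of_nonneg_left (le_coordMax w i) hb)

lemma coordMax_add_const {N : ℕ} [Nonempty (Fin N)] (u : Fin N → ℝ) (c : ℝ) :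
    coordMax N (fun i => u i + c) = coordMax N u + c := by
  apply le_antisymm
  · exact coordMax_le fun i => by have := le_coordMax u i; linarith
  · have : coordMax N u ≤ coordMax N (fun i => u i + c) - c :=
      coordMax_le fun i => by have := le_coordMax (fun i => u i + c) i; linarith
    linarith

lemma integrable_coordMax {N : ℕ} [Nonempty (Fin N)] {μ : Measure (Fin N → ℝ)}
    [IsProbabilityMeasure μ] (hint : ∀ i, Integrable (fun x => x i) μ) (v : Fin N → ℝ) :
    Integrable (fun x => coordMax N (v + x)) μ := by
  have hi : Integrable (fun x : Fin N → ℝ => v + x) μ :=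
    Integrable.of_eval fun i => (integrable_const (v i)).add (hint i)
  refine hi.norm.mono
    ((lipschitz_coordMax N).continuous.comp (by fun_prop)).aestronglyMeasurable ?_
  refine Filter.Eventually.of_forall fun x => ?_
  have h0 : coordMax N (0 : Fin N → ℝ) = 0 := by simp [coordMax]
  have := (lipschitz_coordMax N).dist_le_mul (v + x) 0
  simpa [h0, dist_eq_norm] using this

lemma surplus_add_const {N : ℕ} [Nonempty (Fin N)] {μ : Measure (Fin N → ℝ)}
    [IsProbabilityMeasure μ] (hint : ∀ i, Integrable (fun x => x i) μ) (v : Fin N → ℝ) (c : ℝ) :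
    surplus N μ (fun i => v i + c) = surplus N μ v + c := by
  have h : ∀ x : Fin N → ℝ, coordMax N ((fun i => v i + c) + x) = coordMax N (v + x) + c := by
    intro x
    rw [← coordMax_add_const]
    congr 1
    ext i
    simp only [Pi.add_apply]
    ring
  simp_rw [surplus_eq, h]
  rw [integral_add (integrable_coordMax hint v) (integrable_const c)]
  simp

/-- Differentiation under the expectation; Rademacher's theorem for `coordMax` replaces a
discussion of ties between the coordinates. -/
lemma differentiable_surplus {N : ℕ} [Nonempty (Fin N)] {μ : Measure (Fin N → ℝ)}
    [IsProbabilityMeasure μ] (hac : μ ≪ volume)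
    (hint : ∀ i, Integrable (fun x => x i) μ) : Differentiable ℝ (surplus N μ) := by
  intro v
  have hd : ∀ᵐ x ∂μ, DifferentiableAt ℝ (coordMax N) (v + x) := by
    apply hac.ae_le
    exact (measurePreserving_add_left volume v).quasiMeasurePreserving.ae
      (lipschitz_coordMax N).ae_differentiableAt
  have hm : Measurable fun x => fderiv ℝ (coordMax N) (v + x) :=
    (measurable_fderiv ℝ (coordMax N)).comp (measurable_const_add v)
  have key := hasFDerivAt_integral_of_dominated_loc_of_lip (𝕜 := ℝ) (μ := μ)
    (F := fun w x => coordMax N (w + x)) (F' := fun x => fderiv ℝ (coordMax N) (v + x))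
    (x₀ := v) (s := Set.univ) (bound := fun _ => 1) Filter.univ_mem
    (Filter.Eventually.of_forall fun w => (integrable_coordMax hint w).aestronglyMeasurable)
    (integrable_coordMax hint v) hm.aestronglyMeasurable
    (Filter.Eventually.of_forall fun x => by
      refine LipschitzWith.lipschitzOnWith (LipschitzWith.of_dist_le_mul fun a b => ?_)
      simpa using (lipschitz_coordMax N).dist_le_mul (a + x) (b + x))
    (integrable_const _)
    (hd.mono fun x hx => (hasFDerivAt_comp_add_right x).2 hx.hasFDerivAt)
  exact key.2.differentiableAt

lemma convex_surplus {N : ℕ} [Nonempty (Fin N)] {μ : Measure (Fin N → ℝ)}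
    [IsProbabilityMeasure μ] (hint : ∀ i, Integrable (fun x => x i) μ) :
    ConvexOn ℝ Set.univ (surplus N μ) := by
  refine ⟨convex_univ, fun u _ w _ a b ha hb hab => ?_⟩
  simp only [surplus_eq, smul_eq_mul]
  rw [← integral_const_mul, ← integral_const_mul, ← integral_add
    ((integrable_coordMax hint u).const_mul a) ((integrable_coordMax hint w).const_mul b)]
  refine integral_mono (integrable_coordMax hint _)
    (((integrable_coordMax hint u).const_mul a).add ((integrable_coordMax hint w).const_mul b))
    fun x => ?_
  have h := (convex_coordMax N).2 (Set.mem_univ (u + x)) (Set.mem_univ (w + x)) ha hb hab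
  have hx : a • (u + x) + b • (w + x) = a • u + b • w + x := by
    rw [smul_add, smul_add, add_add_add_comm, ← add_smul, hab, one_smul]
  rw [hx] at h
  exact h

lemma surplus_midpoint_lt {N : ℕ} [Nonempty (Fin N)] {μ : Measure (Fin N → ℝ)}
    [IsProbabilityMeasure μ]
    (hsupp : ∀ U : Set (Fin N → ℝ), IsOpen U → U.Nonempty → 0 < μ U)
    (hint : ∀ i, Integrable (fun x => x i) μ) {v w : Fin N → ℝ} {i j : Fin N}
    (hij : w i - v i < w j - v j) :
    2 * surplus N μ ((1 / 2 : ℝ) • v + (1 / 2 : ℝ) • w) < surplus N μ v + surplus N μ w := by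
  set m := (1 / 2 : ℝ) • v + (1 / 2 : ℝ) • w with hm
  let h : (Fin N → ℝ) → ℝ :=
    fun x => coordMax N (v + x) + coordMax N (w + x) - 2 * coordMax N (m + x)
  have hc : Continuous (coordMax N) := (lipschitz_coordMax N).continuous
  have hcont : Continuous h := by fun_prop
  have hvw := (integrable_coordMax hint v).add (integrable_coordMax hint w)
  have hm2 := (integrable_coordMax hint m).const_mul 2
  have hI : ∫ x, h x ∂μ = surplus N μ v + surplus N μ w - 2 * surplus N μ m := by
    simp only [surplus_eq]
    rw [← integral_const_mul, ← integral_add (integrable_coordMax hint v)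
      (integrable_coordMax hint w)]
    exact integral_sub hvw hm2
  have hnn : 0 ≤ h := by
    intro x
    have := (convex_coordMax N).2 (Set.mem_univ (v + x)) (Set.mem_univ (w + x))
      (by norm_num : (0 : ℝ) ≤ 1 / 2) (by norm_num : (0 : ℝ) ≤ 1 / 2) (by norm_num)
    have hx : (1 / 2 : ℝ) • (v + x) + (1 / 2 : ℝ) • (w + x) = m + x := by
      rw [smul_add, smul_add, add_add_add_comm, ← add_smul]
      norm_num [hm]
    rw [hx] at this
    simp only [smul_eq_mul] at this
    simp only [h, Pi.zero_apply]
    linarith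
  have hpos : 0 < h (-m) := by
    -- At `x = -m` the third maximum vanishes; `i` and `j` bound the other two from below.
    have h1 := le_coordMax (v + -m) i
    have h2 := le_coordMax (w + -m) j
    have h3 : coordMax N (m + -m) = 0 := by simp [coordMax]
    simp only [h, h3]
    simp only [hm, Pi.add_apply, Pi.neg_apply, Pi.smul_apply, smul_eq_mul] at h1 h2
    linarith
  have : 0 < ∫ x, h x ∂μ := by
    rw [integral_pos_iff_support_of_nonneg hnn (hvw.sub hm2)]
    exact hsupp _ hcont.isOpen_support ⟨-m, hpos.ne'⟩
  linarith

lemma exp_surplus_midpoint_lt {N : ℕ} [Nonempty (Fin N)] {μ : Measure (Fin N → ℝ)}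
    [IsProbabilityMeasure μ]
    (hsupp : ∀ U : Set (Fin N → ℝ), IsOpen U → U.Nonempty → 0 < μ U)
    (hint : ∀ i, Integrable (fun x => x i) μ) {v w : Fin N → ℝ} (hvw : v ≠ w) :
    2 * exp (surplus N μ ((1 / 2 : ℝ) • v + (1 / 2 : ℝ) • w)) <
      exp (surplus N μ v) + exp (surplus N μ w) := by
  by_cases hW : surplus N μ v = surplus N μ w
  · obtain ⟨i, j, hij⟩ : ∃ i j, w i - v i < w j - v j := by
      by_contra! hcon
      obtain ⟨k⟩ := ‹Nonempty (Fin N)›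
      have hwv : w = fun i => v i + (w k - v k) := by
        ext i
        have := hcon i k
        have := hcon k i
        linarith
      have hs := surplus_add_const hint v (w k - v k)
      rw [← hwv] at hs
      have hk : w k - v k = 0 := by linarith
      apply hvw
      rw [hwv, hk]
      simp
    have := surplus_midpoint_lt hsupp hint hij
    rw [← hW] at this ⊢
    have : exp (surplus N μ ((1 / 2 : ℝ) • v + (1 / 2 : ℝ) • w)) < exp (surplus N μ v) :=
      exp_lt_exp.2 (by linarith)
    linarith
  · have h1 := (convex_surplus hint (μ := μ)).2 (Set.mem_univ v) (Set.mem_univ w)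
      (by norm_num : (0 : ℝ) ≤ 1 / 2) (by norm_num : (0 : ℝ) ≤ 1 / 2) (by norm_num)
    have h2 := strictConvexOn_exp.2 (Set.mem_univ (surplus N μ v)) (Set.mem_univ (surplus N μ w))
      hW (by norm_num : (0 : ℝ) < 1 / 2) (by norm_num : (0 : ℝ) < 1 / 2) (by norm_num)
    have h3 := exp_le_exp.2 h1
    simp only [smul_eq_mul] at h2 h3
    linarith

/-- The tangent inequality for a differentiable convex function. -/
lemma tangent_le {E : Type*} [NormedAddCommGroup E] [NormedSpace ℝ E] {f : E → ℝ}
    (hf : ConvexOn ℝ Set.univ f) {v : E} (hd : DifferentiableAt ℝ f v) (m : E) :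
    f v + fderiv ℝ f v (m - v) ≤ f m := by
  have hg : ConvexOn ℝ Set.univ (f ∘ AffineMap.lineMap (k := ℝ) v m) := by
    simpa using hf.comp_affineMap (AffineMap.lineMap (k := ℝ) v m)
  have hd0 : HasDerivAt (f ∘ AffineMap.lineMap (k := ℝ) v m) (fderiv ℝ f v (m - v)) 0 := by
    refine HasFDerivAt.comp_hasDerivAt (0 : ℝ) ?_ AffineMap.hasDerivAt_lineMap
    simpa using hd.hasFDerivAt
  have := hg.le_slope_of_hasDerivAt (Set.mem_univ 0) (Set.mem_univ 1) one_pos hd0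
  simp only [slope_def_field, Function.comp_apply, AffineMap.lineMap_apply_one,
    AffineMap.lineMap_apply_zero, sub_zero, div_one] at this
  linarith

/-- Lemma A.1, injectivity part: the map `v ↦ ∇(e^W)(v)` from `ℝ^N` to `ℝ^N`
is injective; equivalently, `H` restricted to the positive orthant `(0,∞)^N` is injective. -/
theorem gradExpSurplus_injective (N : ℕ) (hN : 2 ≤ N) (μ : Measure (Fin N → ℝ))
    (hprob : IsProbabilityMeasure μ) (hac : μ ≪ volume)
    (hsupp : ∀ U : Set (Fin N → ℝ), IsOpen U → U.Nonempty → 0 < μ U)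
    (hint : ∀ i, Integrable (fun x => x i) μ) :
    Function.Injective
      (fun v : Fin N → ℝ =>
        fun i => fderiv ℝ (fun w => Real.exp (surplus N μ w)) v (Pi.single i 1)) ∧
    Set.InjOn (genH N μ) {y : Fin N → ℝ | ∀ i, 0 < y i} := by
  have : Nonempty (Fin N) := ⟨⟨0, by omega⟩⟩
  have hdiff : Differentiable ℝ (fun w => Real.exp (surplus N μ w)) :=
    (differentiable_surplus hac hint).exp
  have hconv : ConvexOn ℝ Set.univ (fun w => Real.exp (surplus N μ w)) := by
    refine ⟨convex_univ, fun u _ w _ a b ha hb hab => ?_⟩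
    exact (exp_le_exp.2 ((convex_surplus hint).2 (Set.mem_univ u) (Set.mem_univ w) ha hb hab)).trans
      (convexOn_exp.2 (Set.mem_univ _) (Set.mem_univ _) ha hb hab)
  have hinj : Function.Injective
      (fun v : Fin N → ℝ =>
        fun i => fderiv ℝ (fun w => Real.exp (surplus N μ w)) v (Pi.single i 1)) := by
    intro v w hvw
    by_contra hne
    have hL : fderiv ℝ (fun w => Real.exp (surplus N μ w)) v =
        fderiv ℝ (fun w => Real.exp (surplus N μ w)) w := by
      apply ContinuousLinearMap.coe_injective
      refine LinearMap.pi_ext' fun i => LinearMap.ext_ring ?_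
      exact congrFun hvw i
    have h1 := tangent_le hconv (hdiff v) ((1 / 2 : ℝ) • v + (1 / 2 : ℝ) • w)
    have h2 := tangent_le hconv (hdiff w) ((1 / 2 : ℝ) • v + (1 / 2 : ℝ) • w)
    have h3 := exp_surplus_midpoint_lt hsupp hint hne
    -- The midpoint lies symmetrically between `v` and `w`, so the linear terms cancel.
    have e : (1 / 2 : ℝ) • v + (1 / 2 : ℝ) • w - v =
        -((1 / 2 : ℝ) • v + (1 / 2 : ℝ) • w - w) := by
      module
    rw [hL, e, map_neg] at h1
    linarith
  refine ⟨hinj, fun y hy z hz hyz => ?_⟩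
  have hlog : (fun j => Real.log (y j)) = fun j => Real.log (z j) := hinj hyz
  ext i
  exact Real.log_injOn_pos (hy i) (hz i) (congrFun hlog i)
end

section
/- (Shannon rational inattention solution; Matejka–McKay.) Suppose the strategy p*(·) maximizes Σ_{v ∈ 𝒱} μ(v)(v·p(v)) − κ(p(·), μ) over all strategies p(·) with values in Δ, and suppose its unconditional probabilities p⁰ = Σ_{v ∈ 𝒱} μ(v) p*(v) have all coordinates strictly positive. Then for every v ∈ 𝒱 with μ(v) > 0 and every i, p*_i(v) = p⁰_i e^{v_i} / Σ_{j=1}^N p⁰_j e^{v_j}. -/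
/-!
Write `D(a ‖ b) = ∑ i, a i * (log (a i) - log (b i))`. For a positive vector `q`, put
`Z v = ∑ j, q j * exp (v j)` and let `r v i = q i * exp (v i) / Z v` be the logit rule with prior
weights `q`. Expanding `log (r v i) = log (q i) + v i - log (Z v)` shows that every strategy `P`
with unconditional probabilities `u` satisfies (`shannonObj_eq`)

  `objective P = ∑ v, w v * (log (Z v) - D(P v ‖ r v)) + D(u ‖ q)`.

Take `q` to be the unconditional probabilities of the maximizer `p`. At `P = p` the last term
vanishes; at `P = r` all the terms `D(P v ‖ r v)` vanish and the last one is nonnegative by Gibbs'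
inequality. Optimality of `p` against `r` thus gives `∑ v, w v * D(p v ‖ r v) ≤ 0`. By Gibbs'
inequality each summand is nonnegative, so `D(p v ‖ r v) = 0` whenever `w v > 0`, and the equality
case of Gibbs' inequality yields `p v = r v`.
-/

open Real

/-- The unconditional choice probabilities `p⁰ = ∑_{v ∈ 𝒱} μ(v) p(v)` of a strategy `p(·)`. -/
noncomputable def uncond (N : ℕ) (V : Finset (Fin N → ℝ)) (w : (Fin N → ℝ) → ℝ)
    (p : (Fin N → ℝ) → (Fin N → ℝ)) (i : Fin N) : ℝ :=
  ∑ v ∈ V, w v * p v i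

/-- The Shannon mutual-information cost
`κ(p(·), μ) = −∑_i p⁰_i log p⁰_i + ∑_{v ∈ 𝒱} μ(v) ∑_i p_i(v) log p_i(v)`
(with the convention `0 · log 0 = 0`, automatic since `Real.log 0 = 0`). -/
noncomputable def shannonCost (N : ℕ) (V : Finset (Fin N → ℝ)) (w : (Fin N → ℝ) → ℝ)
    (p : (Fin N → ℝ) → (Fin N → ℝ)) : ℝ :=
  -∑ i, uncond N V w p i * Real.log (uncond N V w p i) +
    ∑ v ∈ V, w v * ∑ i, p v i * Real.log (p v i)

/-- The rationally inattentive DM's objective `∑_{v ∈ 𝒱} μ(v) (v·p(v)) − κ(p(·), μ)`. -/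
noncomputable def shannonObj (N : ℕ) (V : Finset (Fin N → ℝ)) (w : (Fin N → ℝ) → ℝ)
    (p : (Fin N → ℝ) → (Fin N → ℝ)) : ℝ :=
  ∑ v ∈ V, w v * (∑ i, v i * p v i) - shannonCost N V w p

/-- The relative entropy `∑ i, a i (log (a i) - log (b i))` of finite vectors; it is only used with
`b` positive, so the junk value of `log` at `0` only enters as `0 * log 0 = 0`. -/
noncomputable def relEnt {N : ℕ} (a b : Fin N → ℝ) : ℝ :=
  ∑ i, a i * (Real.log (a i) - Real.log (b i))

/-- The normalizing constant of the logit rule with prior weights `q`. -/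
noncomputable def partitionFn {N : ℕ} (q v : Fin N → ℝ) : ℝ :=
  ∑ j, q j * Real.exp (v j)

/-- The logit rule with prior weights `q`: the exponential tilting of `q` by the payoffs `v`. -/
noncomputable def logitRule {N : ℕ} (q v : Fin N → ℝ) (i : Fin N) : ℝ :=
  q i * Real.exp (v i) / partitionFn q v

/-- Pointwise form of Gibbs' inequality, strict off the diagonal. -/
lemma sub_lt_mul_log_sub_log {a b : ℝ} (ha : 0 ≤ a) (hb : 0 < b) (hab : a ≠ b) :
    a - b < a * (Real.log a - Real.log b) := by
  rcases ha.eq_or_lt with rfl | ha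
  · simpa using hb
  · have h := Real.log_lt_sub_one_of_pos (div_pos hb ha)
      (fun h => hab ((div_eq_one_iff_eq ha.ne').1 h).symm)
    rw [Real.log_div hb.ne' ha.ne'] at h
    have h2 := mul_lt_mul_of_pos_left h ha
    have h3 : a * (b / a - 1) = b - a := by field_simp
    linarith

lemma sub_le_mul_log_sub_log {a b : ℝ} (ha : 0 ≤ a) (hb : 0 < b) :
    a - b ≤ a * (Real.log a - Real.log b) := by
  rcases eq_or_ne a b with rfl | hab
  · simp
  · exact (sub_lt_mul_log_sub_log ha hb hab).le

/-- Gibbs' inequality. -/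
lemma relEnt_nonneg {N : ℕ} {a b : Fin N → ℝ} (ha : ∀ i, 0 ≤ a i) (hb : ∀ i, 0 < b i)
    (hab : ∑ i, a i = ∑ i, b i) : 0 ≤ relEnt a b := by
  have h : ∑ i, (a i - b i) ≤ relEnt a b :=
    Finset.sum_le_sum fun i _ => sub_le_mul_log_sub_log (ha i) (hb i)
  rwa [Finset.sum_sub_distrib, hab, sub_self] at h

/-- The equality case of Gibbs' inequality. -/
lemma eq_of_relEnt_nonpos {N : ℕ} {a b : Fin N → ℝ} (ha : ∀ i, 0 ≤ a i) (hb : ∀ i, 0 < b i)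
    (hab : ∑ i, a i = ∑ i, b i) (h0 : relEnt a b ≤ 0) (i : Fin N) : a i = b i := by
  by_contra hne
  have h : ∑ i, (a i - b i) < relEnt a b :=
    Finset.sum_lt_sum (fun i _ => sub_le_mul_log_sub_log (ha i) (hb i))
      ⟨i, Finset.mem_univ i, sub_lt_mul_log_sub_log (ha i) (hb i) hne⟩
  rw [Finset.sum_sub_distrib, hab, sub_self] at h
  linarith

lemma relEnt_self {N : ℕ} (a : Fin N → ℝ) : relEnt a a = 0 := by
  simp [relEnt]

lemma sum_uncond {N : ℕ} {V : Finset (Fin N → ℝ)} {w : (Fin N → ℝ) → ℝ}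
    {P : (Fin N → ℝ) → (Fin N → ℝ)} (hw1 : ∑ v ∈ V, w v = 1)
    (hP : ∀ v ∈ V, P v ∈ unitSimplex N) : ∑ i, uncond N V w P i = 1 := by
  unfold uncond
  rw [Finset.sum_comm, ← hw1]
  refine Finset.sum_congr rfl fun v hv => ?_
  rw [← Finset.mul_sum, (hP v hv).2, mul_one]

lemma partitionFn_pos {N : ℕ} (hN : 0 < N) {q : Fin N → ℝ} (hq : ∀ i, 0 < q i)
    (v : Fin N → ℝ) : 0 < partitionFn q v :=
  Finset.sum_pos (fun j _ => mul_pos (hq j) (Real.exp_pos _)) ⟨⟨0, hN⟩, Finset.mem_univ _⟩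

lemma logitRule_pos {N : ℕ} (hN : 0 < N) {q : Fin N → ℝ} (hq : ∀ i, 0 < q i)
    (v : Fin N → ℝ) (i : Fin N) : 0 < logitRule q v i :=
  div_pos (mul_pos (hq i) (Real.exp_pos _)) (partitionFn_pos hN hq v)

lemma logitRule_mem {N : ℕ} (hN : 0 < N) {q : Fin N → ℝ} (hq : ∀ i, 0 < q i)
    (v : Fin N → ℝ) : logitRule q v ∈ unitSimplex N := by
  refine ⟨fun i => (logitRule_pos hN hq v i).le, ?_⟩
  unfold logitRule
  rw [← Finset.sum_div]
  exact div_self (partitionFn_pos hN hq v).ne'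

lemma log_logitRule {N : ℕ} (hN : 0 < N) {q : Fin N → ℝ} (hq : ∀ i, 0 < q i)
    (v : Fin N → ℝ) (i : Fin N) :
    Real.log (logitRule q v i) = Real.log (q i) + v i - Real.log (partitionFn q v) := by
  unfold logitRule
  rw [Real.log_div (mul_pos (hq i) (Real.exp_pos _)).ne' (partitionFn_pos hN hq v).ne',
    Real.log_mul (hq i).ne' (Real.exp_pos _).ne', Real.log_exp]

/-- The payoff in state `v`, net of the cost of moving away from the prior `q`, falls short of the
log-partition function by exactly the divergence from the logit rule. -/
lemma log_partitionFn_sub_relEnt {N : ℕ} (hN : 0 < N) {q : Fin N → ℝ} (hq : ∀ i, 0 < q i)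
    (v : Fin N → ℝ) {a : Fin N → ℝ} (ha : a ∈ unitSimplex N) :
    Real.log (partitionFn q v) - relEnt a (logitRule q v) =
      ∑ i, v i * a i - relEnt a q := by
  have h : Real.log (partitionFn q v) = ∑ i, a i * Real.log (partitionFn q v) := by
    rw [← Finset.sum_mul, ha.2, one_mul]
  rw [h]
  unfold relEnt
  rw [← Finset.sum_sub_distrib, ← Finset.sum_sub_distrib]
  refine Finset.sum_congr rfl fun i _ => ?_
  rw [log_logitRule hN hq]
  ring

/-- Decomposition of the objective around an arbitrary positive reference vector `q`. -/
lemma shannonObj_eq {N : ℕ} (hN : 0 < N) {q : Fin N → ℝ} (hq : ∀ i, 0 < q i)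
    (V : Finset (Fin N → ℝ)) (w : (Fin N → ℝ) → ℝ) {P : (Fin N → ℝ) → (Fin N → ℝ)}
    (hP : ∀ v ∈ V, P v ∈ unitSimplex N) :
    shannonObj N V w P =
      ∑ v ∈ V, w v * (Real.log (partitionFn q v) - relEnt (P v) (logitRule q v)) +
        relEnt (uncond N V w P) q := by
  have h1 : ∑ v ∈ V, w v * (Real.log (partitionFn q v) - relEnt (P v) (logitRule q v)) =
      ∑ v ∈ V, w v * (∑ i, v i * P v i) - ∑ v ∈ V, w v * (∑ i, P v i * Real.log (P v i)) +
        ∑ v ∈ V, w v * (∑ i, P v i * Real.log (q i)) := by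
    rw [← Finset.sum_sub_distrib, ← Finset.sum_add_distrib]
    refine Finset.sum_congr rfl fun v hv => ?_
    rw [log_partitionFn_sub_relEnt hN hq v (hP v hv)]
    simp only [relEnt, mul_sub, Finset.sum_sub_distrib]
    ring
  have h2 : ∑ v ∈ V, w v * (∑ i, P v i * Real.log (q i)) =
      ∑ i, uncond N V w P i * Real.log (q i) := by
    simp only [uncond, Finset.mul_sum, Finset.sum_mul]
    rw [Finset.sum_comm]
    simp only [mul_assoc]
  rw [h1, h2]
  simp only [shannonObj, shannonCost, relEnt, mul_sub, Finset.sum_sub_distrib]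
  ring

/-- Shannon rational inattention solution; Matejka–McKay: if the strategy `p*`
maximizes the Shannon rational inattention objective over all strategies with values in `Δ`,
and its unconditional probabilities `p⁰` are all strictly positive, then for every `v ∈ 𝒱` with
`μ(v) > 0`, `p*_i(v) = p⁰_i e^{v_i} / ∑_j p⁰_j e^{v_j}`. -/
theorem shannon_RI_solution (N : ℕ) (hN : 2 ≤ N)
    (V : Finset (Fin N → ℝ)) (w : (Fin N → ℝ) → ℝ)
    (hw0 : ∀ v ∈ V, 0 ≤ w v) (hw1 : ∑ v ∈ V, w v = 1)
    (p : (Fin N → ℝ) → (Fin N → ℝ)) (hp : ∀ v ∈ V, p v ∈ unitSimplex N)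
    (hmax : ∀ p' : (Fin N → ℝ) → (Fin N → ℝ), (∀ v ∈ V, p' v ∈ unitSimplex N) →
      shannonObj N V w p' ≤ shannonObj N V w p)
    (hpos : ∀ i, 0 < uncond N V w p i) :
    ∀ v ∈ V, 0 < w v → ∀ i,
      p v i = uncond N V w p i * Real.exp (v i) /
        ∑ j, uncond N V w p j * Real.exp (v j) := by
  have hN0 : 0 < N := by omega
  set q := uncond N V w p with hq
  have hr : ∀ v ∈ V, logitRule q v ∈ unitSimplex N := fun v _ => logitRule_mem hN0 hpos v
  have hle := hmax (logitRule q) hr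
  rw [shannonObj_eq hN0 hpos V w hr, shannonObj_eq hN0 hpos V w hp, ← hq, relEnt_self] at hle
  simp only [relEnt_self, sub_zero, add_zero, mul_sub, Finset.sum_sub_distrib] at hle
  have hu : 0 ≤ relEnt (uncond N V w (logitRule q)) q :=
    relEnt_nonneg (fun i => Finset.sum_nonneg fun v hv => mul_nonneg (hw0 v hv) ((hr v hv).1 i))
      hpos ((sum_uncond hw1 hr).trans (sum_uncond hw1 hp).symm)
  have hsum : ∀ v ∈ V, ∑ i, p v i = ∑ i, logitRule q v i := fun v hv =>
    (hp v hv).2.trans (hr v hv).2.symm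
  have hterm : ∀ v ∈ V, 0 ≤ w v * relEnt (p v) (logitRule q v) := fun v hv =>
    mul_nonneg (hw0 v hv)
      (relEnt_nonneg (hp v hv).1 (logitRule_pos hN0 hpos v) (hsum v hv))
  intro v hv hwv i
  have hv0 : w v * relEnt (p v) (logitRule q v) ≤ 0 :=
    (Finset.single_le_sum hterm hv).trans (by linarith)
  exact eq_of_relEnt_nonpos (hp v hv).1 (logitRule_pos hN0 hpos v) (hsum v hv)
    (nonpos_of_mul_nonpos_right hv0 hwv) i
end

section
/- (Corollary A.2, Shannon case.) Let p⁰ ∈ Δ satisfy the Shannon rational-inattention optimality conditions: for every i, Σ_{v ∈ 𝒱} μ(v) e^{v_i} / (Σ_{j=1}^N p⁰_j e^{v_j}) ≤ 1, with equality whenever p⁰_i > 0. Suppose there exist options a and d such that v_a ≤ v_d for every v ∈ 𝒱, and v_a < v_d for some v ∈ 𝒱 with μ(v) > 0. Then p⁰_a = 0. -/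
/-!
The left-hand side of the optimality condition is strictly larger at `d` than at `a`: the
summands are compared one by one, the common denominator `∑ j, p0 j * exp (v j)` being positive
because `p0` is a probability vector. If `p0 a > 0`, the value at `a` is exactly `1`, so the value
at `d` would exceed `1`, contradicting optimality.
-/

open Real

/-- Corollary A.2, Shannon case: let `p⁰ ∈ Δ` satisfy the Shannon
rational-inattention optimality conditions
`∑_{v ∈ 𝒱} μ(v) e^{v_i} / (∑_j p⁰_j e^{v_j}) ≤ 1` for every `i`, with equality whenever
`p⁰_i > 0`. If option `a` is dominated by option `d` (`v_a ≤ v_d` on `𝒱`, strictly for some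
`v` with `μ(v) > 0`), then `p⁰_a = 0`. -/
theorem shannon_dominated_option_excluded (N : ℕ) (hN : 2 ≤ N)
    (V : Finset (Fin N → ℝ)) (w : (Fin N → ℝ) → ℝ)
    (hw0 : ∀ v ∈ V, 0 ≤ w v) (hw1 : ∑ v ∈ V, w v = 1)
    (p0 : Fin N → ℝ) (hp0 : p0 ∈ unitSimplex N)
    (hfoc : ∀ i, (∑ v ∈ V, w v * Real.exp (v i) / ∑ j, p0 j * Real.exp (v j)) ≤ 1)
    (hfoc' : ∀ i, 0 < p0 i →
      (∑ v ∈ V, w v * Real.exp (v i) / ∑ j, p0 j * Real.exp (v j)) = 1)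
    (a d : Fin N)
    (hdom : ∀ v ∈ V, v a ≤ v d)
    (hstrict : ∃ v ∈ V, 0 < w v ∧ v a < v d) :
    p0 a = 0 := by
  obtain ⟨hnn, hsum⟩ := hp0
  have hZ : ∀ v : Fin N → ℝ, 0 < ∑ j, p0 j * Real.exp (v j) := by
    intro v
    obtain ⟨j, hj, hjpos⟩ : ∃ j ∈ Finset.univ, 0 < p0 j :=
      Finset.exists_lt_of_sum_lt (s := Finset.univ) (f := fun _ => (0 : ℝ)) (g := p0)
        (by simp [hsum])
    exact Finset.sum_pos' (fun k _ => mul_nonneg (hnn k) (Real.exp_pos _).le)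
      ⟨j, hj, mul_pos hjpos (Real.exp_pos _)⟩
  by_contra hne
  have ha := hfoc' a (lt_of_le_of_ne (hnn a) (Ne.symm hne))
  have hlt : (∑ v ∈ V, w v * Real.exp (v a) / ∑ j, p0 j * Real.exp (v j)) <
      ∑ v ∈ V, w v * Real.exp (v d) / ∑ j, p0 j * Real.exp (v j) := by
    obtain ⟨v₀, hv₀, hw, hv⟩ := hstrict
    refine Finset.sum_lt_sum (fun v hvV => ?_) ⟨v₀, hv₀, ?_⟩
    · exact div_le_div_of_nonneg_right
        (mul_le_mul_of_nonneg_left (Real.exp_le_exp.2 (hdom v hvV)) (hw0 v hvV)) (hZ v).le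
    · exact div_lt_div_of_pos_right
        (mul_lt_mul_of_pos_left (Real.exp_lt_exp.2 hv) hw) (hZ v₀)
  linarith [hfoc d]
end

section
/- (Nested logit generator function.) Fix a partition of {1,…,N} into nonempty nests and, for each nest g, a parameter ζ_g ∈ (0,1]; write g_i for the nest containing i. Define the nested logit surplus W_NL(ṽ) = log ( Σ_{nests g} ( Σ_{j ∈ g} e^{ṽ_j/ζ_g} )^{ζ_g} ) and H_NL(y) = ∇(e^{W_NL})(log y) for y ∈ (0,∞)^N, so that H_{NL,i}(y) = y_i^{1/ζ_{g_i}} ( Σ_{j ∈ g_i} y_j^{1/ζ_{g_i}} )^{ζ_{g_i}−1}. Define S_NL,i(q) = q_i^{ζ_{g_i}} ( Σ_{j ∈ g_i} q_j )^{1−ζ_{g_i}}. Then for every q in the relative interior of the unit simplex Δ, H_NL(S_NL(q)) = q; that is, S_NL is the inverse generator function of the nested logit model. -/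
/-!
Write `Q` for the total mass of the nest of `i` and `z` for its parameter. The value
`nlS q j = q j ^ z * Q ^ (1 - z)` has the `1/z`-th power `q j * Q ^ ((1 - z) / z)`, which is linear
in `q j` (`rpow_mul_rpow_one_div`). Summing over the nest therefore gives
`Q * Q ^ ((1 - z) / z) = Q ^ (1 / z)`, and the second factor of `nlH` becomes `Q ^ ((z - 1) / z)`,
which exactly cancels the factor `Q ^ ((1 - z) / z)` coming from the first one.
-/

open Real

/-- The nested logit surplus `W_NL(ṽ) = log (∑_g (∑_{j ∈ g} e^{ṽ_j/ζ_g})^{ζ_g})`, where the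
nests are the fibers of `g : Fin N → ι`. -/
noncomputable def nlSurplus (N : ℕ) {ι : Type*} [Fintype ι] [DecidableEq ι]
    (g : Fin N → ι) (ζ : ι → ℝ) (v : Fin N → ℝ) : ℝ :=
  Real.log (∑ k : ι,
    (∑ j ∈ Finset.univ.filter (fun j => g j = k), Real.exp (v j / ζ k)) ^ (ζ k))

/-- The nested logit `H` function,
`H_{NL,i}(y) = y_i^{1/ζ_{g_i}} (∑_{j ∈ g_i} y_j^{1/ζ_{g_i}})^{ζ_{g_i}−1}`,
which equals `∇(e^{W_NL})(log y)`. -/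
noncomputable def nlH (N : ℕ) {ι : Type*} [Fintype ι] [DecidableEq ι]
    (g : Fin N → ι) (ζ : ι → ℝ) (y : Fin N → ℝ) (i : Fin N) : ℝ :=
  y i ^ ((1 : ℝ) / ζ (g i)) *
    (∑ j ∈ Finset.univ.filter (fun j => g j = g i), y j ^ ((1 : ℝ) / ζ (g i))) ^ (ζ (g i) - 1)

/-- The nested logit generator function
`S_{NL,i}(q) = q_i^{ζ_{g_i}} (∑_{j ∈ g_i} q_j)^{1−ζ_{g_i}}`. -/
noncomputable def nlS (N : ℕ) {ι : Type*} [Fintype ι] [DecidableEq ι]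
    (g : Fin N → ι) (ζ : ι → ℝ) (q : Fin N → ℝ) (i : Fin N) : ℝ :=
  q i ^ (ζ (g i)) *
    (∑ j ∈ Finset.univ.filter (fun j => g j = g i), q j) ^ (1 - ζ (g i))

/-- The `1/z`-th power of a value of `nlS`, with `a = q j` and `Q` the mass of the nest of `j`. -/
theorem rpow_mul_rpow_one_div {a Q z : ℝ} (ha : 0 < a) (hQ : 0 < Q) (hz : 0 < z) :
    (a ^ z * Q ^ (1 - z)) ^ (1 / z) = a * Q ^ ((1 - z) / z) := by
  rw [mul_rpow (rpow_nonneg ha.le _) (rpow_nonneg hQ.le _), ← rpow_mul ha.le, ← rpow_mul hQ.le,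
    mul_one_div_cancel hz.ne', rpow_one, mul_one_div]

/-- nested logit generator function: for a partition of `{1,…,N}` into nonempty
nests (the fibers of the surjection `g`) with nest parameters `ζ_g ∈ (0,1]`, the function
`S_NL` is the inverse generator of the nested logit model: `H_NL(S_NL(q)) = q` for every `q`
in the relative interior of the unit simplex `Δ`. -/
theorem nestedLogit_H_S_inverse (N : ℕ) (hN : 2 ≤ N)
    {ι : Type*} [Fintype ι] [DecidableEq ι]
    (g : Fin N → ι) (hg : Function.Surjective g)
    (ζ : ι → ℝ) (hζ0 : ∀ k, 0 < ζ k) (hζ1 : ∀ k, ζ k ≤ 1) :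
    ∀ q ∈ unitSimplexRI N, ∀ i, nlH N g ζ (nlS N g ζ q) i = q i := by
  rintro q ⟨hq, -⟩ i
  have hz := hζ0 (g i)
  have hQ : 0 < ∑ j ∈ Finset.univ.filter (fun j => g j = g i), q j :=
    Finset.sum_pos (fun j _ => hq j) ⟨i, by simp⟩
  have hsum : ∑ j ∈ Finset.univ.filter (fun j => g j = g i), nlS N g ζ q j ^ (1 / ζ (g i)) =
      (∑ j ∈ Finset.univ.filter (fun j => g j = g i), q j) ^ (1 / ζ (g i)) := by
    -- every `j` in the nest of `i` shares its parameter and its mass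
    have hterm : ∀ j ∈ Finset.univ.filter (fun j => g j = g i), nlS N g ζ q j ^ (1 / ζ (g i)) =
        q j * (∑ j ∈ Finset.univ.filter (fun j => g j = g i), q j) ^
          ((1 - ζ (g i)) / ζ (g i)) := by
      intro j hj
      have hj' : g j = g i := by simpa using hj
      simp only [nlS, hj']
      exact rpow_mul_rpow_one_div (hq j) hQ hz
    rw [Finset.sum_congr rfl hterm, ← Finset.sum_mul, ← rpow_one_add' hQ.le]
    · congr 1
      field_simp
      ring
    · have : 1 + (1 - ζ (g i)) / ζ (g i) = 1 / ζ (g i) := by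
        field_simp
        ring
      rw [this]
      positivity
  rw [nlH, hsum, nlS, rpow_mul_rpow_one_div (hq i) hQ hz, ← rpow_mul hQ.le, mul_assoc,
    ← rpow_add hQ]
  have hexp : (1 - ζ (g i)) / ζ (g i) + 1 / ζ (g i) * (ζ (g i) - 1) = 0 := by ring
  rw [hexp, rpow_zero, mul_one]
end
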